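/- On M = 𝕋^d × ℝ^d with ω = Σ dθ_j ∧ da_j, every symplectic vector field X on M decomposes uniquely as X = X_A + X₂, where X_A is the Hamiltonian vector field of a smooth function A with zero fiberwise average (∫_{𝕋^d} A(θ,a) dθ = 0 for every a), and X₂ is a symplectic vector field whose pushforward under π : M → ℝ^d is a well-defined vector field on ℝ^d (i.e. dπ(X₂) at points of a common fiber agree). Moreover X₂ equals the fiberwise angle-average of X. -/

import Mathlib

open MeasureTheory

/-- The standard symplectic form `ω = Σ dθ_j ∧ da_j` on `M = 𝕋^d × ℝ^d`. -/
def stdSymp (d : ℕ) (v w : (Fin d → ℝ) × (Fin d → ℝ)) : ℝ :=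
  ∑ j, (v.1 j * w.2 j - w.1 j * v.2 j)

/-- The properties required of the two pieces `(A, X₂)` of the decomposition of a symplectic
vector field `X` on `M = 𝕋^d × ℝ^d`: `A` is a smooth zero-fiberwise-average Hamiltonian with
`ω(X - X₂, ·) = -dA` (i.e. `X - X₂ = X_A`), and `X₂` is a smooth symplectic vector field whose
pushforward under `π(θ,a) = a` is well defined. -/
def IsDecomposition (d : ℕ)
    (X : ((Fin d → ℝ) × (Fin d → ℝ)) → ((Fin d → ℝ) × (Fin d → ℝ)))
    (A : ((Fin d → ℝ) × (Fin d → ℝ)) → ℝ)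
    (X₂ : ((Fin d → ℝ) × (Fin d → ℝ)) → ((Fin d → ℝ) × (Fin d → ℝ))) : Prop :=
  ContDiff ℝ (⊤ : ℕ∞) A ∧
  (∀ (θ a : Fin d → ℝ) (n : Fin d → ℤ), A (θ + (fun i => (n i : ℝ)), a) = A (θ, a)) ∧
  (∀ p : (Fin d → ℝ) × (Fin d → ℝ),
    (∫ t in Set.Icc (0 : Fin d → ℝ) 1, A (p.1 + t, p.2)) = 0) ∧
  ContDiff ℝ (⊤ : ℕ∞) X₂ ∧
  (∀ (θ a : Fin d → ℝ) (n : Fin d → ℤ), X₂ (θ + (fun i => (n i : ℝ)), a) = X₂ (θ, a)) ∧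
  (∀ (p : (Fin d → ℝ) × (Fin d → ℝ)) (v w : (Fin d → ℝ) × (Fin d → ℝ)),
    fderiv ℝ (fun q => stdSymp d (X₂ q) w) p v = fderiv ℝ (fun q => stdSymp d (X₂ q) v) p w) ∧
  (∀ θ θ' a : Fin d → ℝ, (X₂ (θ, a)).2 = (X₂ (θ', a)).2) ∧
  (∀ (p : (Fin d → ℝ) × (Fin d → ℝ)) (v : (Fin d → ℝ) × (Fin d → ℝ)),
    stdSymp d (X p - X₂ p) v = - fderiv ℝ A p v)

/-- phase space -/
abbrev PhSp (d : ℕ) : Type := (Fin d → ℝ) × (Fin d → ℝ)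

/-- fiberwise average -/
noncomputable def fibAvg {d : ℕ} {F : Type} [NormedAddCommGroup F] [NormedSpace ℝ F]
    (f : PhSp d → F) (p : PhSp d) : F :=
  ∫ t in Set.Icc (0 : Fin d → ℝ) 1, f (p.1 + t, p.2)

section avg
variable {d : ℕ} {F : Type} [NormedAddCommGroup F] [NormedSpace ℝ F]

lemma fibAvg_integrable {f : PhSp d → F} (hf : Continuous f) (p : PhSp d) :
    IntegrableOn (fun t => f (p.1 + t, p.2)) (Set.Icc (0 : Fin d → ℝ) 1) := by
  apply Continuous.integrableOn_Icc
  fun_prop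

lemma fibAvg_sub {f g : PhSp d → F} (hf : Continuous f) (hg : Continuous g) (p : PhSp d) :
    fibAvg (fun q => f q - g q) p = fibAvg f p - fibAvg g p :=
  integral_sub (fibAvg_integrable hf p) (fibAvg_integrable hg p)

lemma fibAvg_clm {G : Type} [NormedAddCommGroup G] [NormedSpace ℝ G] [CompleteSpace F]
    [CompleteSpace G] (L : F →L[ℝ] G) {f : PhSp d → F} (hf : Continuous f) (p : PhSp d) :
    fibAvg (fun q => L (f q)) p = L (fibAvg f p) :=
  L.integral_comp_comm (fibAvg_integrable hf p)

lemma fibAvg_fiberconst [CompleteSpace F] {f : PhSp d → F}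
    (hf : ∀ θ θ' a, f (θ, a) = f (θ', a)) (p : PhSp d) : fibAvg f p = f p := by
  unfold fibAvg
  have : ∀ t, f (p.1 + t, p.2) = f p := fun t => hf _ _ _
  simp [this, Measure.real, Real.volume_Icc_pi]

lemma fibAvg_hasFDerivAt {f : PhSp d → F} (hf : ContDiff ℝ 1 f) (p : PhSp d) :
    HasFDerivAt (fibAvg f) (fibAvg (fderiv ℝ f) p) p := by
  have hc : Continuous (fderiv ℝ f) := hf.continuous_fderiv (by norm_num)
  obtain ⟨U, hU, hUn⟩ := exists_compact_mem_nhds p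
  have hK : IsCompact (U ×ˢ Set.Icc (0 : Fin d → ℝ) 1) := hU.prod isCompact_Icc
  obtain ⟨M, hM⟩ := hK.bddAbove_image
    (f := fun z : PhSp d × (Fin d → ℝ) => ‖fderiv ℝ f (z.1.1 + z.2, z.1.2)‖)
    (by fun_prop)
  refine hasFDerivAt_integral_of_dominated_of_fderiv_le (bound := fun _ => M)
    (F := fun (q : PhSp d) t => f (q.1 + t, q.2))
    (F' := fun (q : PhSp d) t => fderiv ℝ f (q.1 + t, q.2)) hUn ?_ ?_ ?_ ?_ ?_ ?_
  · filter_upwards with x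
    exact (fibAvg_integrable hf.continuous x).aestronglyMeasurable
  · exact fibAvg_integrable hf.continuous p
  · exact (fibAvg_integrable hc p).aestronglyMeasurable
  · filter_upwards [ae_restrict_mem measurableSet_Icc] with t ht x hx
    exact hM ⟨(x, t), ⟨hx, ht⟩, rfl⟩
  · exact continuous_const.integrableOn_Icc
  · filter_upwards with t x hx
    have h1 : HasFDerivAt (fun q : PhSp d => q + (t, 0)) (ContinuousLinearMap.id ℝ _) x :=
      (hasFDerivAt_id x).add_const _
    have h2 : HasFDerivAt f (fderiv ℝ f (x.1 + t, x.2)) (x + (t, 0)) := by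
      have : x + (t, 0) = (x.1 + t, x.2) := by ext <;> simp
      rw [this]
      exact (hf.differentiable (by norm_num) _).hasFDerivAt
    have h3 := h2.comp x h1
    rw [ContinuousLinearMap.comp_id] at h3
    convert h3 using 1
    ext q
    simp only [Function.comp]
    congr 1
    ext <;> simp

lemma fibAvg_fderiv [CompleteSpace F] {f : PhSp d → F} (hf : ContDiff ℝ 1 f) (p v : PhSp d) :
    fderiv ℝ (fibAvg f) p v = fibAvg (fun q => fderiv ℝ f q v) p := by
  rw [(fibAvg_hasFDerivAt hf p).fderiv]
  have hc : Continuous (fderiv ℝ f) := hf.continuous_fderiv (by norm_num)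
  exact (fibAvg_clm (ContinuousLinearMap.apply ℝ F v) hc p).symm

lemma fibAvg_continuous {f : PhSp d → F} (hf : Continuous f) : Continuous (fibAvg f) := by
  unfold fibAvg
  apply continuous_parametric_integral_of_continuous
  · unfold Function.uncurry
    fun_prop
  · exact isCompact_Icc

lemma fibAvg_periodic {f : PhSp d → F}
    (hper : ∀ (θ a : Fin d → ℝ) (n : Fin d → ℤ), f (θ + (fun i => (n i : ℝ)), a) = f (θ, a))
    (θ θ' a : Fin d → ℝ) : fibAvg f (θ, a) = fibAvg f (θ', a) := by
  have key : ∀ θ : Fin d → ℝ, fibAvg f (θ, a) = fibAvg f (0, a) := by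
    intro θ
    have hD := ZSpan.isAddFundamentalDomain' (Pi.basisFun ℝ (Fin d)) volume
    have : Countable (Submodule.span ℤ (Set.range (Pi.basisFun ℝ (Fin d)))).toAddSubgroup :=
      inferInstanceAs (Countable (Submodule.span ℤ (Set.range (Pi.basisFun ℝ (Fin d)))))
    have hD' := hD.vadd_of_comm θ
    have hae : (ZSpan.fundamentalDomain (Pi.basisFun ℝ (Fin d))) =ᵐ[volume]
        Set.Icc (0 : Fin d → ℝ) 1 := by
      rw [ZSpan.fundamentalDomain_pi_basisFun]
      exact Measure.univ_pi_Ico_ae_eq_Icc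
    have e := hD.setIntegral_eq hD' (f := fun t => f (t, a)) (by
      rintro ⟨g, hg⟩ x
      have : ∃ n : Fin d → ℤ, g = fun i => (n i : ℝ) := by
        rw [Submodule.mem_toAddSubgroup, Module.Basis.mem_span_iff_repr_mem] at hg
        choose n hn using hg
        exact ⟨n, funext fun i => by simpa using (hn i).symm⟩
      obtain ⟨n, rfl⟩ := this
      rw [← hper x a n, add_comm]
      rfl)
    unfold fibAvg
    rw [← setIntegral_congr_set hae, ← setIntegral_congr_set hae]
    simp only [zero_add]
    rw [e]
    have := (measurePreserving_add_left volume θ).setIntegral_image_emb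
      (measurableEmbedding_addLeft θ) (fun t => f (t, a))
      (ZSpan.fundamentalDomain (Pi.basisFun ℝ (Fin d)))
    exact this.symm
  rw [key θ, key θ']
end avg

lemma fibAvg_contDiff_nat {d : ℕ} (n : ℕ) : ∀ {F : Type} [NormedAddCommGroup F] [NormedSpace ℝ F]
    {f : PhSp d → F}, ContDiff ℝ n f → ContDiff ℝ n (fibAvg f) := by
  induction n with
  | zero =>
    intro F _ _ f hf
    exact contDiff_zero.2 (fibAvg_continuous (contDiff_zero.1 hf))
  | succ n ih =>
    intro F _ _ f hf
    have h1 : ContDiff ℝ 1 f := hf.of_le (by push_cast; exact le_add_self)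
    push_cast at hf ⊢
    rw [contDiff_succ_iff_fderiv] at hf ⊢
    refine ⟨fun p => (fibAvg_hasFDerivAt h1 p).differentiableAt, by simp, ?_⟩
    have : fderiv ℝ (fibAvg f) = fibAvg (fderiv ℝ f) :=
      funext fun p => (fibAvg_hasFDerivAt h1 p).fderiv
    rw [this]
    exact ih hf.2.2

lemma fibAvg_contDiff {d : ℕ} {F : Type} [NormedAddCommGroup F] [NormedSpace ℝ F]
    {f : PhSp d → F} (hf : ContDiff ℝ (⊤ : ℕ∞) f) : ContDiff ℝ (⊤ : ℕ∞) (fibAvg f) := by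
  rw [contDiff_infty] at hf ⊢
  exact fun n => fibAvg_contDiff_nat n (hf n)

/-- the symplectic form as a continuous bilinear map -/
noncomputable def sympL (d : ℕ) : PhSp d →L[ℝ] PhSp d →L[ℝ] ℝ :=
  LinearMap.toContinuousLinearMap
    ((LinearMap.toContinuousLinearMap (E := PhSp d) (F' := ℝ) (𝕜 := ℝ)).toLinearMap ∘ₗ
      (LinearMap.mk₂ ℝ (stdSymp d)
        (by intro a b c; simp only [stdSymp, ← Finset.sum_add_distrib]
            exact Finset.sum_congr rfl fun j _ => by simp; ring)
        (by intro a b c; simp only [stdSymp, Finset.smul_sum]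
            exact Finset.sum_congr rfl fun j _ => by simp; ring)
        (by intro a b c; simp only [stdSymp, ← Finset.sum_add_distrib]
            exact Finset.sum_congr rfl fun j _ => by simp; ring)
        (by intro a b c; simp only [stdSymp, Finset.smul_sum]
            exact Finset.sum_congr rfl fun j _ => by simp; ring)))

lemma sympL_apply (d : ℕ) (v w : PhSp d) : sympL d v w = stdSymp d v w := rfl

lemma stdSymp_flip (d : ℕ) (v w : PhSp d) : stdSymp d v w = (sympL d).flip w v := rfl

lemma stdSymp_nondeg (d : ℕ) (v v' : PhSp d) (h : ∀ w, stdSymp d v w = stdSymp d v' w) :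
    v = v' := by
  ext j
  · simpa [stdSymp, Pi.single_apply] using h (0, Pi.single j 1)
  · simpa [stdSymp, Pi.single_apply] using h (Pi.single j 1, 0)

lemma const_of_fderiv {d : ℕ} {f : PhSp d → ℝ} (hf : Differentiable ℝ f)
    (h : ∀ p v, fderiv ℝ f p v = 0) (p q : PhSp d) : f p = f q :=
  is_const_of_fderiv_eq_zero hf (fun p => ContinuousLinearMap.ext fun v => h p v) p q

/-- smooth + commuting with the average -/
lemma fibAvg_symp {d : ℕ} {X : PhSp d → PhSp d} (hX : Continuous X) (v p : PhSp d) :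
    fibAvg (fun q => stdSymp d (X q) v) p = stdSymp d (fibAvg X p) v :=
  fibAvg_clm ((sympL d).flip v) hX p

lemma symp_contDiff {d : ℕ} {X : PhSp d → PhSp d} (hX : ContDiff ℝ (⊤ : ℕ∞) X) (v : PhSp d) :
    ContDiff ℝ (⊤ : ℕ∞) (fun q => stdSymp d (X q) v) :=
  ((sympL d).flip v).contDiff.comp hX

lemma avg_closed {d : ℕ} {X : PhSp d → PhSp d} (hX : ContDiff ℝ (⊤ : ℕ∞) X)
    (hclosed : ∀ p v w : PhSp d,
      fderiv ℝ (fun q => stdSymp d (X q) w) p v = fderiv ℝ (fun q => stdSymp d (X q) v) p w)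
    (p v w : PhSp d) :
    fderiv ℝ (fun q => stdSymp d (fibAvg X q) w) p v
      = fderiv ℝ (fun q => stdSymp d (fibAvg X q) v) p w := by
  have h : ∀ w : PhSp d, (fun q => stdSymp d (fibAvg X q) w)
      = fibAvg (fun q => stdSymp d (X q) w) := fun w =>
    funext fun q => (fibAvg_symp hX.continuous w q).symm
  rw [h, h, fibAvg_fderiv ((symp_contDiff hX w).of_le (by exact_mod_cast le_top)),
    fibAvg_fderiv ((symp_contDiff hX v).of_le (by exact_mod_cast le_top))]
  congr 1
  funext q
  exact hclosed q v w

lemma exists_primitive {d : ℕ} {X : PhSp d → PhSp d} (hX : ContDiff ℝ (⊤ : ℕ∞) X)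
    (hclosed : ∀ p v w : PhSp d,
      fderiv ℝ (fun q => stdSymp d (X q) w) p v = fderiv ℝ (fun q => stdSymp d (X q) v) p w) :
    ∃ A : PhSp d → ℝ, ContDiff ℝ (⊤ : ℕ∞) A ∧
      ∀ p v, fderiv ℝ A p v = stdSymp d (X p) v := by
  have hs : ContDiff ℝ (⊤ : ℕ∞) (fun q => sympL d (X q)) := (sympL d).contDiff.comp hX
  have hd : Differentiable ℝ (fun q => sympL d (X q)) := hs.differentiable (by simp)
  obtain ⟨A, hA⟩ := convex_univ.exists_forall_hasFDerivAt_of_fderiv_symmetric isOpen_univ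
    (ω := fun q => sympL d (X q)) hd.differentiableOn (by
      intro p _ v w
      have h : ∀ v w, fderiv ℝ (fun q => sympL d (X q)) p v w
          = fderiv ℝ (fun q => stdSymp d (X q) w) p v := by
        intro v w
        have := ((ContinuousLinearMap.apply ℝ ℝ w).hasFDerivAt.comp p (hd p).hasFDerivAt)
        have e : fderiv ℝ (fun q => stdSymp d (X q) w) p = _ := this.fderiv
        rw [e]
        rfl
      rw [h, h]
      exact hclosed p v w)
  have hA' : fderiv ℝ A = fun q => sympL d (X q) := funext fun p => (hA p trivial).fderiv
  refine ⟨A, ?_, fun p v => by rw [hA', sympL_apply]⟩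
  rw [contDiff_infty_iff_fderiv, hA']
  exact ⟨fun p => (hA p trivial).differentiableAt, hs⟩

lemma decomp_exists {d : ℕ} {X : PhSp d → PhSp d} (hX : ContDiff ℝ (⊤ : ℕ∞) X)
    (hper : ∀ (θ a : Fin d → ℝ) (n : Fin d → ℤ), X (θ + (fun i => (n i : ℝ)), a) = X (θ, a))
    (hclosed : ∀ p v w : PhSp d,
      fderiv ℝ (fun q => stdSymp d (X q) w) p v = fderiv ℝ (fun q => stdSymp d (X q) v) p w) :
    ∃ A, IsDecomposition d X A (fibAvg X) := by
  have hX2 := fibAvg_contDiff hX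
  have hinv := fibAvg_periodic hper
  have one_le : (1 : WithTop ℕ∞) ≤ ((⊤ : ℕ∞) : WithTop ℕ∞) := by exact_mod_cast le_top
  have hsub : ∀ w, (fun q => stdSymp d (fibAvg X q - X q) w)
      = fun q => stdSymp d (fibAvg X q) w - stdSymp d (X q) w := fun w => by
    funext q
    simp only [stdSymp_flip, map_sub]
  obtain ⟨A, hAs, hA⟩ := exists_primitive (hX2.sub hX) (by
    intro p v w
    rw [hsub, hsub, fderiv_fun_sub, fderiv_fun_sub]
    · simp only [sub_apply]
      rw [hclosed p v w, avg_closed hX hclosed p v w]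
    all_goals first
      | exact (symp_contDiff hX2 _).differentiable (by simp) _
      | exact (symp_contDiff hX _).differentiable (by simp) _)
  have hAd : Differentiable ℝ A := hAs.differentiable (by simp)
  have hAavg : ∀ p v, fderiv ℝ (fibAvg A) p v = 0 := by
    intro p v
    rw [fibAvg_fderiv (hAs.of_le one_le)]
    simp only [hA]
    rw [hsub, fibAvg_sub (symp_contDiff hX2 v).continuous (symp_contDiff hX v).continuous,
      fibAvg_symp hX.continuous, fibAvg_fiberconst, sub_self]
    intro θ θ' a
    rw [hinv θ θ' a]
  have hB := const_of_fderiv ((fibAvg_contDiff hAs).differentiable (by simp)) hAavg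
  have hAper : ∀ (θ a : Fin d → ℝ) (n : Fin d → ℤ),
      A (θ + (fun i => (n i : ℝ)), a) = A (θ, a) := by
    intro θ a n
    set s : PhSp d := (fun i => (n i : ℝ), 0) with hs
    let g : PhSp d → ℝ := fun q => A (q + s) - A q
    have hg1 : Differentiable ℝ (fun q : PhSp d => A (q + s)) :=
      hAd.comp (differentiable_id.add_const s)
    have hgd : Differentiable ℝ g := hg1.sub hAd
    have hXs : ∀ q : PhSp d, X (q + s) = X q := by
      rintro ⟨x, y⟩
      simpa [hs] using hper x y n
    have hXs2 : ∀ q : PhSp d, fibAvg X (q + s) = fibAvg X q := by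
      rintro ⟨x, y⟩
      simpa [hs] using hinv _ x y
    have hg0 : ∀ p v, fderiv ℝ g p v = 0 := by
      intro p v
      change fderiv ℝ (fun q => A (q + s) - A q) p v = 0
      rw [fderiv_fun_sub (hg1 p) (hAd p), fderiv_comp_add_right]
      simp [hA, hXs, hXs2]
    have hgc := const_of_fderiv hgd hg0
    have hga : fibAvg g (θ, a) = g (θ, a) := fibAvg_fiberconst (fun _ _ _ => hgc _ _) _
    have : fibAvg g (θ, a) = fibAvg A ((θ, a) + s) - fibAvg A (θ, a) := by
      change fibAvg (fun q => A (q + s) - A q) (θ, a) = _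
      rw [fibAvg_sub hg1.continuous hAd.continuous]
      congr 1
      unfold fibAvg
      congr 1
      funext t
      refine congrArg A ?_
      ext i
      · simp only [hs, Prod.fst_add, Pi.add_apply]
        ring
      · simp [hs]
    rw [hB ((θ, a) + s) (θ, a), sub_self, hga] at this
    have := sub_eq_zero.1 this
    simpa [hs] using this
  refine ⟨fun q => A q - fibAvg A 0, hAs.sub contDiff_const, ?_, ?_, hX2, ?_,
    avg_closed hX hclosed, ?_, ?_⟩
  · intro θ a n
    simp only [hAper]
  · intro p
    change fibAvg (fun q => A q - fibAvg A 0) p = 0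
    rw [fibAvg_sub hAs.continuous continuous_const,
      fibAvg_fiberconst (f := fun _ => fibAvg A 0) (fun _ _ _ => rfl), hB p 0, sub_self]
  · intro θ a n
    exact hinv _ _ _
  · intro θ θ' a
    rw [hinv θ θ' a]
  · intro p v
    rw [fderiv_sub_const, hA]
    simp only [stdSymp_flip, map_sub]
    ring

lemma decomp_unique {d : ℕ} {X : PhSp d → PhSp d} (hX : ContDiff ℝ (⊤ : ℕ∞) X)
    {A : PhSp d → ℝ} {X₂ : PhSp d → PhSp d} (h : IsDecomposition d X A X₂) (p : PhSp d) :
    X₂ p = fibAvg X p := by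
  obtain ⟨hAs, hAper, hA0, hX2, hX2per, hcl, hpush, hham⟩ := h
  have one_le : (1 : WithTop ℕ∞) ≤ ((⊤ : ℕ∞) : WithTop ℕ∞) := by exact_mod_cast le_top
  -- the angle components are fiberwise constant
  have hconst : ∀ θ θ' a, X₂ (θ, a) = X₂ (θ', a) := by
    intro θ θ' a
    have hD : ∀ (b e : Fin d → ℝ) (q : PhSp d),
        fderiv ℝ (fun q => stdSymp d (X₂ q) (0, b)) q (e, 0) = 0 := by
      intro b e q
      have hg := (symp_contDiff hX2 ((0, b) : PhSp d)).of_le one_le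
      have hfc : ∀ x x' y : Fin d → ℝ,
          fderiv ℝ (fun q => stdSymp d (X₂ q) (0, b)) (x, y) (e, 0)
            = fderiv ℝ (fun q => stdSymp d (X₂ q) (0, b)) (x', y) (e, 0) := by
        intro x x' y
        rw [hcl, hcl (x', y)]
        have e1 : (fun q : PhSp d => stdSymp d (X₂ q) (e, 0))
            = fun q : PhSp d => stdSymp d (X₂ (q + (x - x', 0))) (e, 0) := by
          funext q
          have := hpush q.1 (q.1 + (x - x')) q.2
          simp only [stdSymp]
          have e2 : q + (x - x', 0) = (q.1 + (x - x'), q.2) := by ext <;> simp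
          rw [e2, ← this]
          simp
        have e3 := fderiv_comp_add_right (𝕜 := ℝ) (f := fun q : PhSp d => stdSymp d (X₂ q) (e, 0))
          (x := (x', y)) (x - x', 0)
        rw [← e1] at e3
        rw [e3]
        congr 2
        ext <;> simp
      have h1 := fibAvg_fderiv hg q (e, 0)
      rw [fibAvg_fiberconst hfc] at h1
      rw [← h1]
      have hgper := fibAvg_periodic (f := fun q => stdSymp d (X₂ q) (0, b))
        (fun x y n => by simp only [hX2per])
      have hdiff : DifferentiableAt ℝ (fibAvg (fun q => stdSymp d (X₂ q) (0, b))) q :=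
        (fibAvg_hasFDerivAt hg q).differentiableAt
      have hl := hdiff.hasFDerivAt.hasLineDerivAt (e, 0)
      have hl2 : HasLineDerivAt ℝ (fibAvg (fun q => stdSymp d (X₂ q) (0, b))) 0 q (e, 0) := by
        unfold HasLineDerivAt
        convert hasDerivAt_const (0 : ℝ) (fibAvg (fun q => stdSymp d (X₂ q) (0, b)) q) using 1
        funext t
        obtain ⟨x, y⟩ := q
        simpa using hgper _ x y
      exact hl.unique hl2
    refine Prod.ext ?_ (hpush θ θ' a)
    funext j
    have hg := (symp_contDiff hX2 ((0, Pi.single j 1) : PhSp d)).differentiable (by simp)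
    have hc := is_const_of_fderiv_eq_zero (𝕜 := ℝ)
      (f := fun x : Fin d → ℝ => stdSymp d (X₂ (x, a)) (0, Pi.single j 1))
      (hg.comp (differentiable_id.prodMk (differentiable_const a))) (by
        intro x
        ext e
        have h1 : HasFDerivAt (fun x : Fin d → ℝ => ((x, a) : PhSp d))
          (ContinuousLinearMap.inl ℝ _ _) x := hasFDerivAt_prodMk_left x a
        have h2 := (hg (x, a)).hasFDerivAt.comp x h1
        have h3 : fderiv ℝ (fun x : Fin d → ℝ => stdSymp d (X₂ (x, a)) (0, Pi.single j 1)) x = _ :=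
          h2.fderiv
        rw [h3]
        simpa using hD (Pi.single j 1) e (x, a)) θ θ'
    simpa [stdSymp, Pi.single_apply] using hc
  rw [← fibAvg_fiberconst hconst p]
  apply stdSymp_nondeg
  intro w
  have h1 : fibAvg (fun q => fderiv ℝ A q w) p = 0 := by
    rw [← fibAvg_fderiv (hAs.of_le one_le)]
    have : fibAvg A = fun _ => 0 := funext hA0
    simp [this]
  have h2 : (fun q => fderiv ℝ A q w)
      = fun q => stdSymp d (X₂ q) w - stdSymp d (X q) w := by
    funext q
    have := hham q w
    simp only [stdSymp_flip, map_sub] at this ⊢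
    linarith
  rw [h2, fibAvg_sub (symp_contDiff hX2 w).continuous (symp_contDiff hX w).continuous,
    fibAvg_symp hX.continuous, fibAvg_symp hX2.continuous] at h1
  linarith

lemma decomp_unique_ham {d : ℕ} {X : PhSp d → PhSp d}
    {A A' : PhSp d → ℝ} {X₂ : PhSp d → PhSp d} (h : IsDecomposition d X A X₂)
    (h' : IsDecomposition d X A' X₂) : A = A' := by
  obtain ⟨hAs, -, hA0, -, -, -, -, hham⟩ := h
  obtain ⟨hAs', -, hA0', -, -, -, -, hham'⟩ := h'
  have hd := hAs.differentiable (by simp)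
  have hd' := hAs'.differentiable (by simp)
  have hc := const_of_fderiv (f := fun q => A q - A' q) (hd.sub hd') (by
    intro p v
    rw [fderiv_fun_sub (hd p) (hd' p), sub_apply]
    linarith [hham p v, hham' p v])
  funext p
  have h1 : fibAvg (fun q => A q - A' q) p = A p - A' p :=
    fibAvg_fiberconst (fun _ _ _ => hc _ _) p
  rw [fibAvg_sub hAs.continuous hAs'.continuous] at h1
  have e1 : fibAvg A p = 0 := hA0 p
  have e2 : fibAvg A' p = 0 := hA0' p
  linarith

/-- On `M = 𝕋^d × ℝ^d` with `ω = Σ dθ_j ∧ da_j` (torus modelled by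
ℤ^d-periodicity in the angles), every smooth symplectic vector field `X` decomposes uniquely as
`X = X_A + X₂` with `A` of zero fiberwise average and `X₂` symplectic projecting to a
well-defined vector field on the base; moreover `X₂` is the fiberwise angle-average of `X`. -/
theorem symplectic_vector_field_decomposition
    (d : ℕ)
    (X : ((Fin d → ℝ) × (Fin d → ℝ)) → ((Fin d → ℝ) × (Fin d → ℝ)))
    (hsmooth : ContDiff ℝ (⊤ : ℕ∞) X)
    (hper : ∀ (θ a : Fin d → ℝ) (n : Fin d → ℤ), X (θ + (fun i => (n i : ℝ)), a) = X (θ, a))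
    (hclosed : ∀ (p : (Fin d → ℝ) × (Fin d → ℝ)) (v w : (Fin d → ℝ) × (Fin d → ℝ)),
      fderiv ℝ (fun q => stdSymp d (X q) w) p v = fderiv ℝ (fun q => stdSymp d (X q) v) p w) :
    (∃! P : (((Fin d → ℝ) × (Fin d → ℝ)) → ℝ) ×
        (((Fin d → ℝ) × (Fin d → ℝ)) → ((Fin d → ℝ) × (Fin d → ℝ))),
      IsDecomposition d X P.1 P.2) ∧
    (∀ (A : ((Fin d → ℝ) × (Fin d → ℝ)) → ℝ)
        (X₂ : ((Fin d → ℝ) × (Fin d → ℝ)) → ((Fin d → ℝ) × (Fin d → ℝ))),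
      IsDecomposition d X A X₂ →
      ∀ p : (Fin d → ℝ) × (Fin d → ℝ),
        X₂ p = ∫ t in Set.Icc (0 : Fin d → ℝ) 1, X (p.1 + t, p.2)) := by
  obtain ⟨A, hA⟩ := decomp_exists hsmooth hper hclosed
  refine ⟨⟨(A, fibAvg X), hA, ?_⟩, fun A' X₂ h p => decomp_unique hsmooth h p⟩
  rintro ⟨A', X₂⟩ h
  have e : X₂ = fibAvg X := funext fun p => decomp_unique hsmooth h p
  subst e
  exact Prod.ext (decomp_unique_ham h hA) rfl
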